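/- Exhaustive application of the pure literal rule is symmetry-preserving: if F* is obtained from a CNF formula F by exhaustively applying the pure rule, then Aut_syn(F)_{{Lit(F*)}} = Aut_syn(F) and Aut_syn(F)↓_{Lit(F*)} ⊆ Aut_syn(F*). -/

import Mathlib

/-- A literal over a variable type `V`: a variable or its negation. -/
inductive Lit (V : Type) where
  | pos : V → Lit V
  | neg : V → Lit V
deriving DecidableEq

variable {V : Type} [DecidableEq V]

/-- Negation of a literal (so that double negation is the identity). -/
def Lit.negate : Lit V → Lit V
  | .pos v => .neg v
  | .neg v => .pos v

/-- The underlying variable of a literal. -/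
def Lit.var : Lit V → V
  | .pos v => v
  | .neg v => v

/-- A clause is a finite set of literals. -/
abbrev Clause (V : Type) := Finset (Lit V)

/-- A CNF formula is a finite set of clauses. -/
abbrev CNF (V : Type) := Finset (Clause V)

/-- `Var(F)`: the variables occurring in a formula. -/
def CNF.vars (F : CNF V) : Finset V := Finset.sup F (fun C => Finset.image Lit.var C)

/-- `Lit(F) = Var(F) ∪ {v̄ : v ∈ Var(F)}`. -/
def CNF.lits (F : CNF V) : Finset (Lit V) :=
  Finset.image Lit.pos (CNF.vars F) ∪ Finset.image Lit.neg (CNF.vars F)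

/-- The value of a literal under a complete assignment (given on the variables,
which determines a consistent complete assignment on all literals). -/
def Lit.val (σ : V → Bool) : Lit V → Bool
  | .pos v => σ v
  | .neg v => !(σ v)

/-- `C[σ]`: delete from `C` every literal mapped to `⊥` by `σ`
(i.e. keep `l` with `¬l ∉ σ`). -/
def Clause.reduce (σ : V → Bool) (C : Clause V) : Clause V :=
  Finset.filter (fun l => Lit.val σ (Lit.negate l) = false) C

/-- `F[σ]`: delete every clause containing a literal mapped to `⊤` by `σ`
(for a complete assignment: every clause containing no false literal is kept)
and delete from each remaining clause every literal mapped to `⊥`. -/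
def CNF.reduce (F : CNF V) (σ : V → Bool) : CNF V :=
  Finset.image (Clause.reduce σ) (Finset.filter (fun C => ∀ l ∈ C, Lit.val σ l = false) F)

/-- Apply a map on literals elementwise to clauses and formulas. -/
def CNF.map (φ : Lit V → Lit V) (F : CNF V) : CNF V :=
  Finset.image (fun C => Finset.image φ C) F

/-- `φ` is a syntactic symmetry of `F`: a bijection of `Lit(F)` respecting
negation with `φ(F) = F`. -/
def IsSynSym (F : CNF V) (φ : Lit V → Lit V) : Prop :=
  Set.BijOn φ (CNF.lits F : Set (Lit V)) (CNF.lits F : Set (Lit V)) ∧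
  (∀ l ∈ CNF.lits F, φ (Lit.negate l) = Lit.negate (φ l)) ∧
  CNF.map φ F = F

/-- `φ` is a semantic symmetry of `F`: a bijection of `Lit(F)` respecting
negation with `F[σ] = φ(F)[σ]` for every complete assignment `σ`. -/
def IsSemSym (F : CNF V) (φ : Lit V → Lit V) : Prop :=
  Set.BijOn φ (CNF.lits F : Set (Lit V)) (CNF.lits F : Set (Lit V)) ∧
  (∀ l ∈ CNF.lits F, φ (Lit.negate l) = Lit.negate (φ l)) ∧
  ∀ σ : V → Bool, CNF.reduce F σ = CNF.reduce (CNF.map φ F) σ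

/-- Extend a map defined on the literal set `S` by the identity outside `S`. -/
def extendId (S : Finset (Lit V)) (φ : Lit V → Lit V) : Lit V → Lit V :=
  fun l => if l ∈ S then φ l else l

/-- `F[l ↦ ⊤]`: delete every clause containing `l` and delete `l̄` from every
remaining clause. -/
def CNF.assignTrue (F : CNF V) (l : Lit V) : CNF V :=
  Finset.image (fun C => Finset.erase C (Lit.negate l)) (Finset.filter (fun C => l ∉ C) F)

/-- One application of the pure literal rule: if `l ∈ Lit(F)` and no clause of
`F` contains `l̄`, replace `F` by `F[l ↦ ⊤]`. -/
def PureStep (F F' : CNF V) : Prop :=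
  ∃ l : Lit V, l ∈ CNF.lits F ∧ (∀ C ∈ F, Lit.negate l ∉ C) ∧ F' = CNF.assignTrue F l

/-!
An application of the pure literal rule merely deletes the clauses containing the pure literal, and
none of these can lie in a subformula without pure literals. Hence `F*` is the greatest pure-free
subformula of `F`. A syntactic symmetry of `F` maps pure-free subformulas of `F` to pure-free
subformulas of `F`, so it sends `F*` into `F*`, and onto it by counting clauses.
-/

theorem Lit.negate_negate {W : Type} (l : Lit W) : l.negate.negate = l := by
  cases l <;> rfl

namespace CNF

variable {F G : CNF V} {l : Lit V} {φ : Lit V → Lit V}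

theorem mem_vars {v : V} : v ∈ F.vars ↔ ∃ C ∈ F, ∃ l ∈ C, l.var = v := by
  simp only [vars, Finset.mem_sup, Finset.mem_image]

theorem mem_lits_iff_var_mem_vars : l ∈ F.lits ↔ l.var ∈ F.vars := by
  cases l <;> simp [lits, Lit.var]

theorem mem_lits : l ∈ F.lits ↔ ∃ C ∈ F, l ∈ C ∨ l.negate ∈ C := by
  have var_eq_iff (k : Lit V) : k.var = l.var ↔ k = l ∨ k = l.negate := by
    cases k <;> cases l <;> simp [Lit.var, Lit.negate]
  simp only [mem_lits_iff_var_mem_vars, mem_vars, var_eq_iff, and_or_left, exists_or,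
    exists_eq_right]

theorem mem_lits_of_mem {C : Clause V} (hC : C ∈ F) (hl : l ∈ C) : l ∈ F.lits :=
  mem_lits.2 ⟨C, hC, .inl hl⟩

theorem negate_mem_lits (hl : l ∈ F.lits) : l.negate ∈ F.lits := by
  simpa only [mem_lits, Lit.negate_negate, or_comm] using hl

theorem lits_mono (h : G ⊆ F) : G.lits ⊆ F.lits := fun _ hl ↦
  let ⟨C, hC, hlC⟩ := mem_lits.1 hl
  mem_lits.2 ⟨C, h hC, hlC⟩

theorem map_mono (φ : Lit V → Lit V) (h : G ⊆ F) : G.map φ ⊆ F.map φ :=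
  Finset.image_subset_image h

theorem lits_map (hφ : ∀ l ∈ G.lits, φ l.negate = (φ l).negate) :
    (G.map φ).lits = G.lits.image φ := by
  ext l
  rw [mem_lits, map, Finset.exists_mem_image]
  simp only [Finset.mem_image]
  constructor
  · rintro ⟨C, hC, ⟨k, hk, rfl⟩ | ⟨k, hk, hkl⟩⟩
    · exact ⟨k, mem_lits_of_mem hC hk, rfl⟩
    · have hkG := mem_lits_of_mem hC hk
      exact ⟨k.negate, negate_mem_lits hkG, by rw [hφ k hkG, hkl, Lit.negate_negate]⟩
  · rintro ⟨k, hk, rfl⟩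
    obtain ⟨C, hC, hkC | hkC⟩ := mem_lits.1 hk
    · exact ⟨C, hC, .inl ⟨k, hkC, rfl⟩⟩
    · exact ⟨C, hC, .inr ⟨k.negate, hkC, hφ k hk⟩⟩

theorem card_map_of_injOn (hφ : Set.InjOn φ G.lits) : (G.map φ).card = G.card := by
  have hpowerset : (G : Set (Clause V)) ⊆ G.lits.powerset := fun _ hC ↦
    Finset.mem_powerset.2 fun _ hl ↦ mem_lits_of_mem hC hl
  exact Finset.card_image_of_injOn ((Finset.image_injOn_powerset_of_injOn hφ).mono hpowerset)

/-- `F` has no pure literal, i.e. the pure literal rule does not apply to `F`. -/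
def PureFree (F : CNF V) : Prop :=
  ¬ ∃ l : Lit V, l ∈ F.lits ∧ ∀ C ∈ F, l.negate ∉ C

theorem pureFree_iff_forall_mem_lits : F.PureFree ↔ ∀ l ∈ F.lits, ∃ C ∈ F, l ∈ C := by
  simp only [PureFree, not_exists, not_and, not_forall, not_not, exists_prop]
  refine ⟨fun h l hl ↦ ?_, fun h l hl ↦ h _ (negate_mem_lits hl)⟩
  simpa only [Lit.negate_negate] using h _ (negate_mem_lits hl)

theorem PureFree.map (hG : G.PureFree) (hφ : ∀ l ∈ G.lits, φ l.negate = (φ l).negate) :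
    (G.map φ).PureFree := by
  rw [pureFree_iff_forall_mem_lits, lits_map hφ, Finset.forall_mem_image]
  intro l hl
  obtain ⟨C, hC, hlC⟩ := pureFree_iff_forall_mem_lits.1 hG l hl
  exact ⟨C.image φ, Finset.mem_image_of_mem _ hC, Finset.mem_image_of_mem φ hlC⟩

/-- `K` is the pure core of `F`: the greatest subformula of `F` without pure literals. It
characterises the result `F*` of exhaustive pure literal elimination independently of the order in
which the rule is applied. -/
def IsPureCore (F K : CNF V) : Prop :=
  IsGreatest {G : CNF V | G ⊆ F ∧ G.PureFree} K

theorem assignTrue_of_forall_negate_notMem (hl : ∀ C ∈ F, l.negate ∉ C) :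
    F.assignTrue l = F.filter (l ∉ ·) := by
  rw [assignTrue, Finset.image_congr (g := id), Finset.image_id]
  exact fun C hC ↦ Finset.erase_eq_of_notMem (hl C (Finset.mem_of_mem_filter C hC))

theorem PureFree.notMem_of_forall_negate_notMem (hG : G.PureFree)
    (hl : ∀ C ∈ G, l.negate ∉ C) {C : Clause V} (hC : C ∈ G) : l ∉ C :=
  fun hlC ↦ hG ⟨l, mem_lits_of_mem hC hlC, hl⟩

end CNF

namespace PureStep

variable {F F' G : CNF V}

theorem subset (h : PureStep F F') : F' ⊆ F := by
  obtain ⟨l, -, hl, rfl⟩ := h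
  rw [CNF.assignTrue_of_forall_negate_notMem hl]
  exact Finset.filter_subset _ _

theorem subset_of_pureFree (h : PureStep F F') (hG : G.PureFree) (hGF : G ⊆ F) : G ⊆ F' := by
  obtain ⟨l, -, hl, rfl⟩ := h
  rw [CNF.assignTrue_of_forall_negate_notMem hl]
  have hlG : ∀ C ∈ G, l.negate ∉ C := fun C hC ↦ hl C (hGF hC)
  exact fun C hC ↦ Finset.mem_filter.2 ⟨hGF hC, hG.notMem_of_forall_negate_notMem hlG hC⟩

theorem isPureCore_of_reflTransGen (h : Relation.ReflTransGen PureStep F F')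
    (hF' : F'.PureFree) : F.IsPureCore F' := by
  induction h using Relation.ReflTransGen.head_induction_on with
  | refl => exact ⟨⟨subset_rfl, hF'⟩, fun G hG ↦ hG.1⟩
  | head step _ ih =>
    exact ⟨⟨ih.1.1.trans step.subset, hF'⟩,
      fun G hG ↦ ih.2 ⟨step.subset_of_pureFree hG.2 hG.1, hG.2⟩⟩

end PureStep

namespace IsSynSym

variable {F K : CNF V} {φ : Lit V → Lit V}

theorem of_subset_of_map_eq (hφ : IsSynSym F φ) (hKF : K ⊆ F) (hK : K.map φ = K) :
    IsSynSym K φ := by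
  obtain ⟨hbij, hneg, -⟩ := hφ
  have hlits := CNF.lits_mono hKF
  have hnegK : ∀ l ∈ K.lits, φ l.negate = (φ l).negate := fun l hl ↦ hneg l (hlits hl)
  have himage : φ '' K.lits = K.lits := by
    rw [← Finset.coe_image, ← CNF.lits_map hnegK, hK]
  refine ⟨?_, hnegK, hK⟩
  simpa only [himage] using (hbij.injOn.mono (Finset.coe_subset.2 hlits)).bijOn_image

theorem map_eq_of_isPureCore (hφ : IsSynSym F φ) (hK : F.IsPureCore K) : K.map φ = K := by
  obtain ⟨hbij, hneg, hmap⟩ := hφ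
  obtain ⟨⟨hKF, hpure⟩, hgreatest⟩ := hK
  have hlits := CNF.lits_mono hKF
  have hsub : K.map φ ⊆ F := hmap ▸ CNF.map_mono φ hKF
  have hle : K.map φ ⊆ K := hgreatest ⟨hsub, hpure.map fun l hl ↦ hneg l (hlits hl)⟩
  exact Finset.eq_of_subset_of_card_le hle
    (CNF.card_map_of_injOn (hbij.injOn.mono (Finset.coe_subset.2 hlits))).ge

end IsSynSym

/-- Exhaustive application of the pure literal rule is
symmetry-preserving: if `F*` is obtained from `F` by exhaustively applying
the pure rule, then every syntactic symmetry of `F` setwise stabilizes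
`Lit(F*)` (so `Aut_syn(F)_{{Lit(F*)}} = Aut_syn(F)`) and its restriction to
`Lit(F*)` is a syntactic symmetry of `F*`
(so `Aut_syn(F)↓_{Lit(F*)} ⊆ Aut_syn(F*)`). -/
theorem exhaustive_pure_symmetry_preserving (F Fs : CNF V)
    (hsteps : Relation.ReflTransGen PureStep F Fs)
    (hdone : ¬ ∃ l : Lit V, l ∈ CNF.lits Fs ∧ ∀ C ∈ Fs, Lit.negate l ∉ C) :
    (∀ φ : Lit V → Lit V, IsSynSym F φ →
        φ '' (CNF.lits Fs : Set (Lit V)) = (CNF.lits Fs : Set (Lit V))) ∧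
    (∀ φ : Lit V → Lit V, IsSynSym F φ →
        φ '' (CNF.lits Fs : Set (Lit V)) = (CNF.lits Fs : Set (Lit V)) →
        IsSynSym Fs φ) := by
  have hcore : F.IsPureCore Fs := PureStep.isPureCore_of_reflTransGen hsteps hdone
  have hsym (φ : Lit V → Lit V) (hφ : IsSynSym F φ) : IsSynSym Fs φ :=
    hφ.of_subset_of_map_eq hcore.1.1 (hφ.map_eq_of_isPureCore hcore)
  exact ⟨fun φ hφ ↦ (hsym φ hφ).1.image_eq, fun φ hφ _ ↦ hsym φ hφ⟩
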